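/- (Generalized quantum Capelli identity, symmetric form.) Let R be a skew-invertible Hecke symmetry with parameter q such that j_q ≠ 0 for 2 ≤ j ≤ k, let M and D be N×N matrices with entries in a unital associative ℂ-algebra 𝒜 satisfying the Reflection Equation R M₁ R M₁ = M₁ R M₁ R, the relation R⁻¹ D₁ R⁻¹ D₁ = D₁ R⁻¹ D₁ R⁻¹, and the permutation relations D₁ R M₁ = R M₁ R⁻¹ D₁ R⁻¹ + I, and set L := M D. Then for every k ≥ 1, as an identity in 𝒜: ⟨S^(k) L_{1̄} (L_{2̄} − q⁻¹·I) ⋯ (L_{k̄} − q^{−(k−1)}·(k−1)_q·I)⟩_{1…k} = q^{−k(k−1)} ⟨S^(k) M_{1̄} ⋯ M_{k̄} D_{k̄} ⋯ D_{1̄}⟩_{1…k}. -/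

import Mathlib

open Matrix BigOperators

noncomputable section

/-- An `N² × N²` complex matrix, viewed as an operator on `ℂ^N ⊗ ℂ^N`. -/
abbrev RMat (N : ℕ) := Matrix (Fin N × Fin N) (Fin N × Fin N) ℂ

/-- A matrix on the `k`-th tensor power of `ℂ^N`, with entries in `A`. -/
abbrev TMat (N k : ℕ) (A : Type _) := Matrix (Fin k → Fin N) (Fin k → Fin N) A

/-- The `q`-number `j_q = (q^j - q^{-j})/(q - q^{-1})`. -/
def qNum (q : ℂ) (j : ℕ) : ℂ := (q ^ j - q⁻¹ ^ j) / (q - q⁻¹)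

/-- Embedding of an `N²×N²` matrix `R` into the `k`-th tensor power,
acting in the (0-based) tensor factors `i` and `i+1`.  The paper's `R_i`
(1-based) is `embR k R (i-1)`. -/
def embR {N : ℕ} (k : ℕ) (R : RMat N) (i : ℕ) : TMat N k ℂ := fun f g =>
  if h : i + 1 < k then
    if ∀ j : Fin k, j.val ≠ i → j.val ≠ i + 1 → f j = g j then
      R (f ⟨i, Nat.lt_of_succ_lt h⟩, f ⟨i + 1, h⟩) (g ⟨i, Nat.lt_of_succ_lt h⟩, g ⟨i + 1, h⟩)
    else 0
  else (1 : TMat N k ℂ) f g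

/-- `X ⊗ I^{⊗(k-1)}` : the first copy `X_{1̄}` of an `N×N` matrix over `A`. -/
def emb1 {N : ℕ} (k : ℕ) {A : Type _} [Ring A] (X : Matrix (Fin N) (Fin N) A) :
    TMat N k A := fun f g =>
  if h : 0 < k then
    if ∀ j : Fin k, j.val ≠ 0 → f j = g j then X (f ⟨0, h⟩) (g ⟨0, h⟩) else 0
  else (1 : TMat N k A) f g

/-- Lift a complex matrix to a matrix over the `ℂ`-algebra `A`. -/
def liftC {N k : ℕ} (A : Type _) [Ring A] [Algebra ℂ A] (X : TMat N k ℂ) : TMat N k A :=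
  X.map (algebraMap ℂ A)

/-- The copies `X_{1̄}, X_{2̄}, …` of `X` in the `k`-th tensor power:
`copyX k R Rinv X i` is the paper's `X_{\overline{i+1}}`, i.e.
`X_{1̄} = X ⊗ I^{⊗(k-1)}` and `X_{\overline{i+1}} = R_i X_{ī} R_i⁻¹`. -/
def copyX {N : ℕ} (k : ℕ) (R Rinv : RMat N) {A : Type _} [Ring A] [Algebra ℂ A]
    (X : Matrix (Fin N) (Fin N) A) : ℕ → TMat N k A
  | 0 => emb1 k X
  | i + 1 => liftC A (embR k R i) * copyX k R Rinv X i * liftC A (embR k Rinv i)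

/-- The `R`-skew-symmetrizers, on the ambient `k`-th tensor power:
`Asym k R q j` is `A^{(j)}` (acting in the first `j` factors). -/
def Asym {N : ℕ} (k : ℕ) (R : RMat N) (q : ℂ) : ℕ → TMat N k ℂ
  | 0 => 1
  | 1 => 1
  | j + 2 =>
      (qNum q (j + 2))⁻¹ •
        (Asym k R q (j + 1) *
          ((q ^ (j + 1)) • (1 : TMat N k ℂ) - (qNum q (j + 1)) • embR k R j) *
          Asym k R q (j + 1))

/-- The `R`-symmetrizers, on the ambient `k`-th tensor power:
`Ssym k R q j` is `S^{(j)}` (acting in the first `j` factors). -/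
def Ssym {N : ℕ} (k : ℕ) (R : RMat N) (q : ℂ) : ℕ → TMat N k ℂ
  | 0 => 1
  | 1 => 1
  | j + 2 =>
      (qNum q (j + 2))⁻¹ •
        (Ssym k R q (j + 1) *
          ((q⁻¹ ^ (j + 1)) • (1 : TMat N k ℂ) + (qNum q (j + 1)) • embR k R j) *
          Ssym k R q (j + 1))

/-- The braid relation `R₁₂ R₂₃ R₁₂ = R₂₃ R₁₂ R₂₃` on `(ℂ^N)^{⊗3}`. -/
def IsBraiding {N : ℕ} (R : RMat N) : Prop :=
  embR 3 R 0 * embR 3 R 1 * embR 3 R 0 = embR 3 R 1 * embR 3 R 0 * embR 3 R 1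

/-- The Hecke condition `(q·I − R)(q⁻¹·I + R) = 0`. -/
def HeckeCond {N : ℕ} (R : RMat N) (q : ℂ) : Prop :=
  (q • (1 : RMat N) - R) * (q⁻¹ • (1 : RMat N) + R) = 0

/-- The Reflection Equation `R M₁ R M₁ = M₁ R M₁ R` (on `(ℂ^N)^{⊗2}`,
with entries in `A`). -/
def RERel {N : ℕ} (R : RMat N) {A : Type _} [Ring A] [Algebra ℂ A]
    (M : Matrix (Fin N) (Fin N) A) : Prop :=
  liftC A (embR 2 R 0) * emb1 2 M * liftC A (embR 2 R 0) * emb1 2 M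
    = emb1 2 M * liftC A (embR 2 R 0) * emb1 2 M * liftC A (embR 2 R 0)

/-- The relation `R⁻¹ D₁ R⁻¹ D₁ = D₁ R⁻¹ D₁ R⁻¹` on the matrix `D`,
where `Rinv = R⁻¹`. -/
def DDRel {N : ℕ} (Rinv : RMat N) {A : Type _} [Ring A] [Algebra ℂ A]
    (D : Matrix (Fin N) (Fin N) A) : Prop :=
  liftC A (embR 2 Rinv 0) * emb1 2 D * liftC A (embR 2 Rinv 0) * emb1 2 D
    = emb1 2 D * liftC A (embR 2 Rinv 0) * emb1 2 D * liftC A (embR 2 Rinv 0)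

/-- The permutation relations `D₁ R M₁ = R M₁ R⁻¹ D₁ R⁻¹ + I`, where `Rinv = R⁻¹`. -/
def PermRel {N : ℕ} (R Rinv : RMat N) {A : Type _} [Ring A] [Algebra ℂ A]
    (M D : Matrix (Fin N) (Fin N) A) : Prop :=
  emb1 2 D * liftC A (embR 2 R 0) * emb1 2 M
    = liftC A (embR 2 R 0) * emb1 2 M * liftC A (embR 2 Rinv 0) * emb1 2 D *
        liftC A (embR 2 Rinv 0) + 1

/-- `Ψ` is the skew-inverse of `R`:  `Σ_{j,b} R^{ij}_{ab} Ψ^{bc}_{jd} = δ^i_d δ^c_a`. -/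
def SkewInv {N : ℕ} (R Ψ : RMat N) : Prop :=
  ∀ i a c d : Fin N,
    (∑ j : Fin N, ∑ b : Fin N, R (i, j) (a, b) * Ψ (b, c) (j, d))
      = if i = d ∧ c = a then 1 else 0

/-- The matrix `C`, `C^c_d = Σ_i Ψ^{ic}_{id}`. -/
def Cmat {N : ℕ} (Ψ : RMat N) : Matrix (Fin N) (Fin N) ℂ :=
  fun c d => ∑ i : Fin N, Ψ (i, c) (i, d)

/-- The `R`-trace over all `k` tensor factors: `⟨X⟩_{1…k} = Tr(C^{⊗k} X)`. -/
def rTr {N k : ℕ} {A : Type _} [Ring A] [Algebra ℂ A] (C : Matrix (Fin N) (Fin N) ℂ)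
    (X : TMat N k A) : A :=
  ∑ f : Fin k → Fin N, ∑ g : Fin k → Fin N, (∏ j : Fin k, C (f j) (g j)) • X g f

/-- The chain `X_{1̄} X_{2̄} ⋯ X_{n̄}`. -/
def upChain {N : ℕ} (k : ℕ) (R Rinv : RMat N) {A : Type _} [Ring A] [Algebra ℂ A]
    (X : Matrix (Fin N) (Fin N) A) (n : ℕ) : TMat N k A :=
  ((List.range n).map (copyX k R Rinv X)).prod

/-- The reversed chain `X_{n̄} X_{\overline{n-1}} ⋯ X_{1̄}`. -/
def downChain {N : ℕ} (k : ℕ) (R Rinv : RMat N) {A : Type _} [Ring A] [Algebra ℂ A]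
    (X : Matrix (Fin N) (Fin N) A) (n : ℕ) : TMat N k A :=
  ((List.range n).reverse.map (copyX k R Rinv X)).prod

/-- The Capelli chain `L_{1̄}(L_{2̄} + q·1_q I)(L_{3̄} + q²·2_q I) ⋯ (L_{n̄} + q^{n-1}·(n-1)_q I)`
(note `0_q = 0`). -/
def capChainA {N : ℕ} (k : ℕ) (R Rinv : RMat N) (q : ℂ) {A : Type _} [Ring A] [Algebra ℂ A]
    (L : Matrix (Fin N) (Fin N) A) (n : ℕ) : TMat N k A :=
  ((List.range n).map
    (fun i => copyX k R Rinv L i + ((q ^ i) * qNum q i) • (1 : TMat N k A))).prod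

/-- The symmetric Capelli chain
`L_{1̄}(L_{2̄} - q⁻¹·1_q I) ⋯ (L_{n̄} - q^{-(n-1)}·(n-1)_q I)`. -/
def capChainS {N : ℕ} (k : ℕ) (R Rinv : RMat N) (q : ℂ) {A : Type _} [Ring A] [Algebra ℂ A]
    (L : Matrix (Fin N) (Fin N) A) (n : ℕ) : TMat N k A :=
  ((List.range n).map
    (fun i => copyX k R Rinv L i - ((q⁻¹ ^ i) * qNum q i) • (1 : TMat N k A))).prod

/-- The descending chain `R_{a→b} = R_a R_{a-1} ⋯ R_b` (1-based indices;
identity when `b > a`). -/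
def rChainDesc {N : ℕ} (k : ℕ) (R : RMat N) (a b : ℕ) : TMat N k ℂ :=
  ((List.range' b (a + 1 - b)).reverse.map (fun j => embR k R (j - 1))).prod

/-- The ascending chain `R_{b→a} = R_b R_{b+1} ⋯ R_a` (1-based indices;
identity when `b > a`). -/
def rChainAsc {N : ℕ} (k : ℕ) (R : RMat N) (b a : ℕ) : TMat N k ℂ :=
  ((List.range' b (a + 1 - b)).map (fun j => embR k R (j - 1))).prod

/-!
By the permutation relation, `D_{n̄} ⋯ D_{1̄}` moves past the next copy of `L = M D`. On vectors on
which every `R_i` acts by `q`, as on the image of `S^(k)`, it does so at the cost of a factor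
`q^{-2n}` and of a multiple `q^{-n} n_q` of itself, which is exactly the shift in the Capelli chain.
So that chain multiplied by `S^(k)` on the right collapses, factor by factor, to
`q^{-k(k-1)} M_{1̄} ⋯ M_{k̄} D_{k̄} ⋯ D_{1̄} S^(k)`.

Under the `R`-trace, `S^(k)` may be moved from the right to the left because `R` commutes with
`C ⊗ C`. That follows by taking the `C`-weighted partial trace over the first factor in the two
forms `R₁₂⁻¹ R₂₃ R₁₂ = R₂₃ R₁₂ R₂₃⁻¹` and `R₁₂ R₂₃ R₁₂⁻¹ = R₂₃⁻¹ R₁₂ R₂₃` of the braid relation and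
then removing `R` with the help of `Ψ`: this expresses both `C₁ R⁻¹` and `R⁻¹ C₁` through `C₂` and
`Ψ`.
-/

section QNumbers

theorem qNum_zero (q : ℂ) : qNum q 0 = 0 := by simp [qNum]

theorem qNum_one {q : ℂ} (hq : q - q⁻¹ ≠ 0) : qNum q 1 = 1 := by
  simp [qNum, div_self hq]

theorem ne_zero_of_sub_inv_ne_zero {q : ℂ} (hq : q - q⁻¹ ≠ 0) : q ≠ 0 := by
  rintro rfl
  simp at hq

theorem qNum_succ {q : ℂ} (hq : q - q⁻¹ ≠ 0) (n : ℕ) :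
    qNum q (n + 1) = q⁻¹ ^ n + q * qNum q n := by
  rw [qNum, qNum, mul_div_assoc', eq_comm, eq_div_iff hq, add_mul, div_mul_cancel₀ _ hq]
  ring

theorem inv_pow_mul_qNum_succ {q : ℂ} (hq : q - q⁻¹ ≠ 0) (n : ℕ) :
    q⁻¹ ^ (n + 1) * qNum q (n + 1) = q⁻¹ ^ (2 * n + 1) + q⁻¹ ^ n * qNum q n := by
  rw [qNum_succ hq]
  linear_combination q⁻¹ ^ n * qNum q n * inv_mul_cancel₀ (ne_zero_of_sub_inv_ne_zero hq)

end QNumbers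

section BraidFamilies

/-- The elements `r 0, …, r (k - 2)` satisfy the relations of the braid group on `k` strands; all
of `r` is subject to far commutativity, so that out-of-range values are typically `1`. -/
structure IsBraidFamily {G : Type*} [Mul G] (k : ℕ) (r : ℕ → G) : Prop where
  commute : ∀ i j, i + 2 ≤ j → Commute (r i) (r j)
  braid : ∀ i, i + 2 < k → r i * r (i + 1) * r i = r (i + 1) * r i * r (i + 1)

variable {B : Type*} [Ring B]

/-- The copies `x, r₀ x r₀⁻¹, r₁ r₀ x r₀⁻¹ r₁⁻¹, …` of `x`, numbered from `0`: the abstract form of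
`X_{1̄}, X_{2̄}, …`. -/
def braidCopy (r : ℕ → Bˣ) (x : B) : ℕ → B
  | 0 => x
  | i + 1 => r i * braidCopy r x i * ↑(r i)⁻¹

theorem braidCopy_mul (r : ℕ → Bˣ) (x y : B) (n : ℕ) :
    braidCopy r (x * y) n = braidCopy r x n * braidCopy r y n := by
  induction n with
  | zero => rfl
  | succ n ih => simp [braidCopy, ih, mul_assoc]

/-- The chain `X_{1̄} ⋯ X_{n̄}` of copies of `x`. -/
def upProd (r : ℕ → Bˣ) (x : B) : ℕ → B
  | 0 => 1
  | n + 1 => upProd r x n * braidCopy r x n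

/-- The chain `X_{n̄} ⋯ X_{1̄}` of copies of `x`. -/
def downProd (r : ℕ → Bˣ) (x : B) : ℕ → B
  | 0 => 1
  | n + 1 => braidCopy r x n * downProd r x n

namespace IsBraidFamily

variable {k : ℕ} {r : ℕ → Bˣ} (hr : IsBraidFamily k r)
include hr

theorem commute_val {i j : ℕ} (h : i + 2 ≤ j) : Commute (r i : B) (r j) :=
  (hr.commute i j h).units_val

theorem commute_braidCopy_of_lt {x : B} (hx : ∀ j, 1 ≤ j → Commute (r j : B) x) {i j : ℕ}
    (h : i < j) : Commute (r j : B) (braidCopy r x i) := by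
  induction i with
  | zero => exact hx j h
  | succ i ih =>
    have hij : Commute (r j : B) (r i) := (hr.commute_val (by lia)).symm
    exact (hij.mul_right (ih (by lia))).mul_right hij.units_inv_right

/-- Conjugation by `r i * r (i + 1)` turns `r i` into `r (i + 1)`. -/
theorem exists_ringHom_apply_eq_braidCopy {i : ℕ} (hi : i + 1 < k) :
    ∃ φ : B →+* B, Units.map (φ : B →* B) (r 0) = r i ∧
      ∀ x, (∀ j, 1 ≤ j → Commute (r j : B) x) → φ x = braidCopy r x i := by
  induction i with
  | zero => exact ⟨RingHom.id B, Units.ext rfl, fun _ _ => rfl⟩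
  | succ i ih =>
    obtain ⟨φ, hφr, hφ⟩ := ih (by lia)
    let u : Bˣ := r i * r (i + 1)
    let conj : B →+* B := MulSemiringAction.toRingHom (ConjAct Bˣ) B (ConjAct.toConjAct u)
    have conj_apply (y : B) : conj y = u * y * ↑u⁻¹ := ConjAct.units_smul_def _ _
    refine ⟨conj.comp φ, Units.ext ?_, fun x hx => ?_⟩
    · have hφr' : φ (r 0) = r i := congrArg Units.val hφr
      have braid : u * r i = r (i + 1) * u := by simpa only [u, mul_assoc] using hr.braid i hi
      simp only [Units.coe_map, MonoidHom.coe_coe, RingHom.comp_apply, hφr', conj_apply]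
      rw [Units.mul_inv_eq_iff_eq_mul]
      exact congrArg Units.val braid
    · have hcomm := hr.commute_braidCopy_of_lt hx (Nat.lt_succ_self i)
      rw [RingHom.comp_apply, hφ x hx, conj_apply, _root_.mul_inv_rev, Units.val_mul, Units.val_mul,
        mul_assoc (r i : B), hcomm.eq]
      simp only [braidCopy, mul_assoc, Units.mul_inv_cancel_left]

theorem commute_braidCopy_of_add_two_le {x : B} (hx : ∀ j, 1 ≤ j → Commute (r j : B) x)
    {j i : ℕ} (h : j + 2 ≤ i) (hi : i < k) : Commute (r j : B) (braidCopy r x i) := by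
  induction i, h using Nat.le_induction with
  | base =>
    let g : Bˣ := r (j + 1) * r j
    have conj_r : SemiconjBy (g : B) (r (j + 1)) (r j) :=
      (show SemiconjBy g (r (j + 1)) (r j) by
        rw [SemiconjBy, ← hr.braid j hi, mul_assoc]).units_val
    have conj_copy : SemiconjBy (g : B) (braidCopy r x j) (braidCopy r x (j + 2)) := by
      simp [g, SemiconjBy, braidCopy, mul_assoc]
    have hcomm := hr.commute_braidCopy_of_lt hx (Nat.lt_succ_self j)
    refine (Units.mul_left_inj g).mp ?_
    rw [← (conj_r.mul_right conj_copy).eq, hcomm.eq, (conj_copy.mul_right conj_r).eq]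
  | succ i h ih =>
    have hij : Commute (r j : B) (r i) := hr.commute_val h
    exact (hij.mul_right (ih (by lia))).mul_right hij.units_inv_right

theorem commute_downProd {x : B} (hx : ∀ j, 1 ≤ j → Commute (r j : B) x)
    {n j : ℕ} (h : n ≤ j) :
    Commute (r j : B) (downProd r x n) := by
  induction n with
  | zero => exact Commute.one_right _
  | succ n ih => exact (hr.commute_braidCopy_of_lt hx h).mul_right (ih (by lia))

end IsBraidFamily

/-- `m` and `d` play the roles of `M₁` and `D₁`: they commute with all `r j` except `r 0`, and
satisfy with `r 0` the permutation relation and the quadratic relation of `D`. -/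
structure IsQuantumWeylPair (k : ℕ) (r : ℕ → Bˣ) (m d : B) : Prop where
  commute_left : ∀ j, 1 ≤ j → Commute (r j : B) m
  commute_right : ∀ j, 1 ≤ j → Commute (r j : B) d
  perm : 1 < k → d * r 0 * m = r 0 * m * ↑(r 0)⁻¹ * d * ↑(r 0)⁻¹ + 1
  rel_right : 1 < k → ↑(r 0)⁻¹ * d * ↑(r 0)⁻¹ * d = d * ↑(r 0)⁻¹ * d * ↑(r 0)⁻¹

namespace IsQuantumWeylPair

variable {k : ℕ} {r : ℕ → Bˣ} {m d : B} (h : IsQuantumWeylPair k r m d) (hr : IsBraidFamily k r)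
  {i : ℕ} (hi : i + 1 < k)
include h hr hi

theorem perm_braidCopy :
    braidCopy r d i * r i * braidCopy r m i =
      r i * braidCopy r m i * ↑(r i)⁻¹ * braidCopy r d i * ↑(r i)⁻¹ + 1 := by
  obtain ⟨φ, hφr, hφ⟩ := hr.exists_ringHom_apply_eq_braidCopy hi
  have := congrArg φ (h.perm (by lia))
  simpa [← hφr, ← hφ m h.commute_left, ← hφ d h.commute_right] using this

theorem rel_braidCopy_right :
    ↑(r i)⁻¹ * braidCopy r d i * ↑(r i)⁻¹ * braidCopy r d i =
      braidCopy r d i * ↑(r i)⁻¹ * braidCopy r d i * ↑(r i)⁻¹ := by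
  obtain ⟨φ, hφr, hφ⟩ := hr.exists_ringHom_apply_eq_braidCopy hi
  have := congrArg φ (h.rel_right (by lia))
  simpa [← hφr, ← hφ d h.commute_right] using this

end IsQuantumWeylPair

end BraidFamilies

section AbstractCapelli

variable {B : Type*} [Ring B] [Algebra ℂ B]

/-- The chain of copies of `l`, the `n`-th one (counted from `0`) shifted by `-q⁻ⁿ n_q`. -/
def capelliProd (r : ℕ → Bˣ) (q : ℂ) (l : B) : ℕ → B
  | 0 => 1
  | n + 1 => capelliProd r q l n * (braidCopy r l n - (q⁻¹ ^ n * qNum q n) • 1)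

theorem inv_mul_eq_inv_smul {q : ℂ} (hq : q ≠ 0) {u : Bˣ} {t : B} (h : u * t = q • t) :
    ↑u⁻¹ * t = q⁻¹ • t := by
  rw [Units.inv_mul_eq_iff_eq_mul, mul_smul_comm, h, inv_smul_smul₀ hq]

namespace IsQuantumWeylPair

theorem mul_mul_mul_eq_of_mul_eq_smul {q : ℂ} (hq : q ≠ 0) {u : Bˣ} {m d p : B}
    (perm : d * u * m = u * m * ↑u⁻¹ * d * ↑u⁻¹ + 1)
    (rel : ↑u⁻¹ * d * ↑u⁻¹ * d = d * ↑u⁻¹ * d * ↑u⁻¹) (hp : u * p = q • p) :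
    d * u * (m * d * p) = q⁻¹ • (u * m * d * ↑u⁻¹ * d * p) + d * p := by
  have rel' : ↑u⁻¹ * (d * (↑u⁻¹ * (d * p))) = q⁻¹ • (d * (↑u⁻¹ * (d * p))) := by
    calc ↑u⁻¹ * (d * (↑u⁻¹ * (d * p))) = ↑u⁻¹ * d * ↑u⁻¹ * d * p := by simp only [mul_assoc]
      _ = q⁻¹ • (d * (↑u⁻¹ * (d * p))) := by
        rw [rel]
        simp only [mul_assoc, inv_mul_eq_inv_smul hq hp, mul_smul_comm]
  calc d * u * (m * d * p) = d * u * m * (d * p) := by simp only [mul_assoc]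
    _ = u * (m * (↑u⁻¹ * (d * (↑u⁻¹ * (d * p))))) + d * p := by
      rw [perm, add_mul, one_mul]
      simp only [mul_assoc]
    _ = q⁻¹ • (u * m * d * ↑u⁻¹ * d * p) + d * p := by
      simp only [rel', mul_smul_comm, mul_assoc]

variable {k : ℕ} {r : ℕ → Bˣ} {m d : B} {q : ℂ}

theorem downProd_mul_braidCopy_mul (h : IsQuantumWeylPair k r m d) (hr : IsBraidFamily k r)
    (hq : q - q⁻¹ ≠ 0) {n : ℕ} (hn : n < k) {t : B} (ht : ∀ i < n, r i * t = q • t) :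
    downProd r d n * (braidCopy r m n * braidCopy r d n * t) =
      q⁻¹ ^ (2 * n) • (braidCopy r m n * braidCopy r d n * (downProd r d n * t)) +
        (q⁻¹ ^ n * qNum q n) • (downProd r d n * t) := by
  induction n with
  | zero => simp [downProd, qNum_zero]
  | succ n ih =>
    have hq0 : q ≠ 0 := ne_zero_of_sub_inv_ne_zero hq
    set W := downProd r d n
    set M := braidCopy r m n
    set D := braidCopy r d n
    have hWt : r n * (W * t) = q • (W * t) := by
      rw [← mul_assoc, (hr.commute_downProd h.commute_right le_rfl).eq, mul_assoc,
        ht n (Nat.lt_succ_self n), mul_smul_comm]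
    have key := mul_mul_mul_eq_of_mul_eq_smul hq0 (h.perm_braidCopy hr hn)
      (h.rel_braidCopy_right hr hn) hWt
    calc downProd r d (n + 1) * (braidCopy r m (n + 1) * braidCopy r d (n + 1) * t)
        = D * W * r n * (M * D * (↑(r n)⁻¹ * t)) := by
          simp [downProd, braidCopy, mul_assoc, W, M, D]
      _ = q⁻¹ • (D * r n * (W * (M * D * t))) := by
          rw [mul_assoc D, ← (hr.commute_downProd h.commute_right le_rfl).eq,
            inv_mul_eq_inv_smul hq0 (ht n (Nat.lt_succ_self n))]
          simp only [mul_smul_comm, mul_assoc, W]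
      _ = q⁻¹ ^ (2 * n + 1) • (D * r n * (M * D * (W * t))) +
            (q⁻¹ ^ n * qNum q n) • (D * (W * t)) := by
          rw [ih (by lia) fun i hi => ht i (by lia), mul_add, mul_smul_comm, mul_smul_comm,
            mul_assoc D (r n : B) (W * t), hWt, mul_smul_comm, smul_add]
          simp only [smul_smul]
          congr 2
          · ring
          · field_simp
      _ = _ := by
          rw [key, inv_pow_mul_qNum_succ hq]
          simp only [downProd, braidCopy, mul_assoc, smul_add, smul_smul, add_smul, ← pow_succ,
            Units.inv_mul_cancel_left, add_assoc, W, D]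
          rfl

theorem capelliProd_mul (h : IsQuantumWeylPair k r m d) (hr : IsBraidFamily k r)
    (hq : q - q⁻¹ ≠ 0) {n : ℕ} (hn : n ≤ k) {t : B} (ht : ∀ i, i + 1 < n → r i * t = q • t) :
    capelliProd r q (m * d) n * t =
      q⁻¹ ^ (n * (n - 1)) • (upProd r m n * downProd r d n * t) := by
  induction n generalizing t with
  | zero => simp [capelliProd, upProd, downProd]
  | succ n ih =>
    set L := braidCopy r (m * d) n with hL
    set shift := q⁻¹ ^ n * qNum q n
    have ht' (i : ℕ) (hi : i + 1 < n) :
        r i * ((L - shift • 1) * t) = q • ((L - shift • 1) * t) := by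
      have hcomm : Commute (r i : B) (L - shift • 1) :=
        (hr.commute_braidCopy_of_add_two_le (fun j hj =>
          (h.commute_left j hj).mul_right (h.commute_right j hj)) hi hn).sub_right
          ((Commute.one_right _).smul_right _)
      rw [← mul_assoc, hcomm.eq, mul_assoc, ht i (by lia), mul_smul_comm]
    have key := h.downProd_mul_braidCopy_mul hr hq hn fun i hi => ht i (by lia)
    have shifted : downProd r d n * ((L - shift • 1) * t) =
        q⁻¹ ^ (2 * n) • (braidCopy r m n * (downProd r d (n + 1) * t)) := by
      rw [hL, braidCopy_mul, sub_mul, mul_sub, key]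
      simp [downProd, mul_assoc, shift]
    rw [capelliProd, mul_assoc, ih (by lia) ht', mul_assoc, shifted, mul_smul_comm, smul_smul,
      ← pow_add, upProd]
    simp only [mul_assoc]
    have exponent : n * (n - 1) + 2 * n = (n + 1) * (n + 1 - 1) := by
      rw [Nat.mul_sub_one, Nat.add_sub_cancel]
      have := Nat.le_mul_self n
      lia
    rw [exponent]

end IsQuantumWeylPair

end AbstractCapelli

section Symmetrizer

/-- A braid family whose elements satisfy the Hecke relation `(q - r i) (q⁻¹ + r i) = 0`, written
as `(r i)² = 1 + (q - q⁻¹) r i`. -/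
structure IsHeckeFamily {B : Type*} [Ring B] [Algebra ℂ B] (k : ℕ) (q : ℂ) (r : ℕ → B) : Prop
    extends IsBraidFamily k r where
  mul_self : ∀ i, i + 1 < k → r i * r i = 1 + (q - q⁻¹) • r i

variable {B : Type*} [Ring B] [Algebra ℂ B]

/-- The symmetrizers `S⁽ⁿ⁾` of the Hecke algebra, given by the recursion of `Ssym`. -/
def symmetrizer (r : ℕ → B) (q : ℂ) : ℕ → B
  | 0 => 1
  | 1 => 1
  | n + 2 => (qNum q (n + 2))⁻¹ • (symmetrizer r q (n + 1) *
      (q⁻¹ ^ (n + 1) • 1 + qNum q (n + 1) • r n) * symmetrizer r q (n + 1))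

theorem commute_symmetrizer {r : ℕ → B} (q : ℂ) {x : B} {n : ℕ}
    (hx : ∀ i, i + 1 < n → Commute x (r i)) : Commute x (symmetrizer r q n) := by
  induction n using symmetrizer.induct with
  | case1 | case2 => exact Commute.one_right x
  | case3 n ih =>
    have ih' := ih fun i hi => hx i (by lia)
    exact ((ih'.mul_right (((Commute.one_right x).smul_right _).add_right
      ((hx n (by lia)).smul_right _))).mul_right ih').smul_right _

variable {q : ℂ}

theorem qNum_smul_symmetrizer {r : ℕ → B} {n : ℕ} (hn : qNum q (n + 2) ≠ 0)
    (hS : IsIdempotentElem (symmetrizer r q (n + 1))) :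
    qNum q (n + 2) • symmetrizer r q (n + 2) = q⁻¹ ^ (n + 1) • symmetrizer r q (n + 1) +
      qNum q (n + 1) • (symmetrizer r q (n + 1) * r n * symmetrizer r q (n + 1)) := by
  rw [symmetrizer, smul_inv_smul₀ hn, mul_add, add_mul]
  simp [hS.eq]

theorem symmetrizer_mul_eq_self (hq : q - q⁻¹ ≠ 0) {r : ℕ → B} {n : ℕ}
    (hn : ∀ j, 2 ≤ j → j ≤ n → qNum q j ≠ 0) {t : B}
    (ht : ∀ i, i + 1 < n → r i * t = q • t) : symmetrizer r q n * t = t := by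
  induction n using symmetrizer.induct with
  | case1 | case2 => exact one_mul t
  | case3 n ih =>
    have ih' := ih (fun j h2 hj => hn j h2 (by lia)) fun i hi => ht i (by lia)
    rw [symmetrizer, smul_mul_assoc, mul_assoc, mul_assoc, ih', add_mul, smul_mul_assoc, one_mul,
      smul_mul_assoc, ht n (by lia), smul_smul, ← add_smul, mul_smul_comm, ih', mul_comm _ q,
      ← qNum_succ hq, inv_smul_smul₀ (hn _ (by lia) le_rfl)]

namespace IsHeckeFamily

variable {k : ℕ} {r : ℕ → B} (hr : IsHeckeFamily k q r)
include hr

theorem mul_mul_add (hq : q ≠ 0) {i : ℕ} (hi : i + 1 < k) (s : B) :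
    r i * (q⁻¹ • s + r i * s) = q • (q⁻¹ • s + r i * s) := by
  have hmul : r i * (r i * s) = s + (q - q⁻¹) • (r i * s) := by
    rw [← mul_assoc, hr.mul_self i hi, add_mul, one_mul, smul_mul_assoc]
  rw [mul_add, hmul, mul_smul_comm, smul_add, smul_inv_smul₀ hq]
  module

/-- With `S = S⁽ⁿ⁺¹⁾`, the symmetrizer `S⁽ⁿ⁺²⁾` becomes a multiple of `q⁻¹ S + r n S` plus `Y`: the
Hecke relation makes the former `q`-eigen for `r n`, the braid relation the latter. -/
theorem exists_mul_eq_smul (hq : q - q⁻¹ ≠ 0) {n : ℕ} (hn : n + 1 < k)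
    (hnum : ∀ j, 2 ≤ j → j ≤ n + 1 → qNum q j ≠ 0)
    (heig : ∀ i < n, r i * symmetrizer r q (n + 1) = q • symmetrizer r q (n + 1)) :
    ∃ Y, r n * Y = q • Y ∧
      qNum q (n + 1) • (symmetrizer r q (n + 1) * r n * symmetrizer r q (n + 1)) =
        q⁻¹ ^ n • (r n * symmetrizer r q (n + 1)) + Y := by
  cases n with
  | zero => exact ⟨0, by simp, by simp [symmetrizer, qNum_one hq]⟩
  | succ n =>
    have htV : Commute (r (n + 1)) (symmetrizer r q (n + 1)) :=
      commute_symmetrizer q fun i hi => (hr.commute i (n + 1) (by lia)).symm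
    have hVS : symmetrizer r q (n + 1) * symmetrizer r q (n + 2) = symmetrizer r q (n + 2) :=
      symmetrizer_mul_eq_self hq (fun j h2 hj => hnum j h2 (by lia)) fun i hi => heig i (by lia)
    have hS : qNum q (n + 2) • symmetrizer r q (n + 2) = symmetrizer r q (n + 1) *
        (q⁻¹ ^ (n + 1) • 1 + qNum q (n + 1) • r n) * symmetrizer r q (n + 1) := by
      rw [symmetrizer, smul_inv_smul₀ (hnum _ (by lia) le_rfl)]
    have hpS := heig n (Nat.lt_succ_self n)
    set V := symmetrizer r q (n + 1)
    set S := symmetrizer r q (n + 2)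
    set p := r n
    set t := r (n + 1)
    refine ⟨qNum q (n + 1) • (V * p * t * S), ?_, ?_⟩
    · suffices t * (V * p * t * S) = q • (V * p * t * S) by rw [mul_smul_comm, this, smul_comm]
      calc t * (V * p * t * S) = V * (t * p * t) * S := by simp only [← mul_assoc, htV.eq]
        _ = V * (p * t * p) * S := by rw [← hr.braid n hn]
        _ = V * p * t * (p * S) := by simp only [mul_assoc]
        _ = q • (V * p * t * S) := by rw [hpS, mul_smul_comm]
    · calc qNum q (n + 2) • (S * t * S) = (qNum q (n + 2) • S) * (t * S) := by
            rw [mul_assoc, smul_mul_assoc]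
        _ = V * (q⁻¹ ^ (n + 1) • 1 + qNum q (n + 1) • p) * (t * (V * S)) := by
            rw [hS, mul_assoc _ V, ← mul_assoc V, ← htV.eq, mul_assoc t]
        _ = q⁻¹ ^ (n + 1) • (V * t * S) + qNum q (n + 1) • (V * p * t * S) := by
            simp only [hVS, mul_add, add_mul, mul_smul_comm, smul_mul_assoc, mul_one, mul_assoc]
        _ = q⁻¹ ^ (n + 1) • (t * S) + qNum q (n + 1) • (V * p * t * S) := by
            rw [← htV.eq, mul_assoc t, hVS]

theorem mul_symmetrizer (hq : q - q⁻¹ ≠ 0) {n : ℕ} (hn : n ≤ k)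
    (hnum : ∀ j, 2 ≤ j → j ≤ n → qNum q j ≠ 0) {i : ℕ} (hi : i + 1 < n) :
    r i * symmetrizer r q n = q • symmetrizer r q n := by
  induction n using symmetrizer.induct generalizing i with
  | case1 | case2 => lia
  | case3 n ih =>
    have hnum' (j : ℕ) (h2 : 2 ≤ j) (hj : j ≤ n + 1) : qNum q j ≠ 0 := hnum j h2 (by lia)
    have heig (i : ℕ) (hi : i < n) := ih (by lia) hnum' (i := i) (by lia)
    rcases (show i ≤ n by lia).lt_or_eq with h | rfl
    · rw [symmetrizer, mul_smul_comm, ← mul_assoc, ← mul_assoc, heig i h, smul_comm]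
      simp only [smul_mul_assoc]
    · have hS : IsIdempotentElem (symmetrizer r q (i + 1)) :=
        symmetrizer_mul_eq_self hq hnum' fun j hj => heig j (by lia)
      obtain ⟨Y, hY, hSrS⟩ := hr.exists_mul_eq_smul hq hn hnum' heig
      have hS' := qNum_smul_symmetrizer (hnum (i + 2) (by lia) le_rfl) hS
      rw [hSrS, pow_succ, mul_smul, ← add_assoc, ← smul_add] at hS'
      refine smul_right_injective B (hnum (i + 2) (by lia) le_rfl) ?_
      simp only
      rw [← mul_smul_comm, smul_comm _ q, hS', mul_add, hY, mul_smul_comm,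
        hr.mul_mul_add (ne_zero_of_sub_inv_ne_zero hq) hn, smul_comm _ q, ← smul_add]

end IsHeckeFamily

end Symmetrizer

section LocalOperators

open scoped Kronecker

variable {ι ι' κ n A : Type*}

/-- Splitting a multi-index over `κ` into its components inside and outside the range of `e`. -/
def splitRangeEquiv (e : ι ↪ κ) (n : Type*) :
    (κ → n) ≃ (ι → n) × ({j // j ∉ Set.range e} → n) :=
  open scoped Classical in
  (Equiv.piEquivPiSubtypeProd (· ∈ Set.range e) fun _ => n).trans
    (((Equiv.ofInjective e e.injective).symm.arrowCongr (Equiv.refl n)).prodCongr (Equiv.refl _))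

theorem splitRangeEquiv_apply (e : ι ↪ κ) (f : κ → n) :
    splitRangeEquiv e n f = (f ∘ e, fun j : {j // j ∉ Set.range e} => f j) := rfl

open scoped Classical in
/-- The operator on the tensor power indexed by `κ` that acts as `X` in the factors `e i` and as
the identity in all other factors. -/
def localOp [Zero A] (e : ι ↪ κ) (X : Matrix (ι → n) (ι → n) A) : Matrix (κ → n) (κ → n) A :=
  of fun f g => if ∀ j, j ∉ Set.range e → f j = g j then X (f ∘ e) (g ∘ e) else 0

theorem localOp_apply [Zero A] (e : ι ↪ κ) (X : Matrix (ι → n) (ι → n) A) (f g : κ → n)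
    [Decidable (∀ j, j ∉ Set.range e → f j = g j)] :
    localOp e X f g =
      if ∀ j, j ∉ Set.range e → f j = g j then X (f ∘ e) (g ∘ e) else 0 := by
  rw [localOp, of_apply]
  congr

theorem localOp_eq_submatrix [Zero A] (e : ι ↪ κ) [DecidableEq ({j // j ∉ Set.range e} → n)]
    (X : Matrix (ι → n) (ι → n) A) :
    localOp e X =
      (blockDiagonal fun _ : {j // j ∉ Set.range e} → n => X).submatrix
        (splitRangeEquiv e n) (splitRangeEquiv e n) := by
  classical
  ext f g
  simp only [localOp_apply, submatrix_apply, splitRangeEquiv_apply, blockDiagonal_apply]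
  exact if_congr (by simp only [funext_iff, Subtype.forall]) rfl rfl

theorem localOp_map {A' : Type*} [Zero A] [Zero A'] (e : ι ↪ κ) (X : Matrix (ι → n) (ι → n) A)
    {φ : A → A'} (hφ : φ 0 = 0) : (localOp e X).map φ = localOp e (X.map φ) := by
  ext f g
  simp only [localOp, of_apply, map_apply, apply_ite φ, hφ]

section Semiring

variable [Semiring A] (e : ι ↪ κ)

theorem localOp_add (X Y : Matrix (ι → n) (ι → n) A) :
    localOp e (X + Y) = localOp e X + localOp e Y := by
  classical
  simp only [localOp_eq_submatrix]
  exact congrArg (submatrix · _ _) (blockDiagonal_add (fun _ => X) fun _ => Y)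

theorem localOp_smul {S : Type*} [Monoid S] [DistribMulAction S A] (c : S)
    (X : Matrix (ι → n) (ι → n) A) : localOp e (c • X) = c • localOp e X := by
  classical
  simp only [localOp_eq_submatrix]
  exact congrArg (submatrix · _ _) (blockDiagonal_smul c fun _ => X)

theorem localOp_one [DecidableEq (ι → n)] [DecidableEq (κ → n)] :
    localOp e (1 : Matrix (ι → n) (ι → n) A) = 1 := by
  classical
  rw [localOp_eq_submatrix, ← submatrix_one_equiv (splitRangeEquiv e n)]
  exact congrArg (submatrix · _ _) blockDiagonal_one

variable [Fintype κ] [DecidableEq κ] [Fintype n]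

theorem localOp_mul [Fintype ι] [DecidableEq ι] (X Y : Matrix (ι → n) (ι → n) A) :
    localOp e (X * Y) = localOp e X * localOp e Y := by
  classical
  simp only [localOp_eq_submatrix, submatrix_mul_equiv, blockDiagonal_mul]

open scoped Classical in
theorem localOp_mul_localOp_apply {e : ι ↪ κ} {e' : ι' ↪ κ}
    (h : Disjoint (Set.range e) (Set.range e')) (X : Matrix (ι → n) (ι → n) A)
    (Y : Matrix (ι' → n) (ι' → n) A) (f g : κ → n) :
    (localOp e X * localOp e' Y) f g =
      if ∀ j, j ∉ Set.range e → j ∉ Set.range e' → f j = g j then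
        X (f ∘ e) (g ∘ e) * Y (f ∘ e') (g ∘ e') else 0 := by
  set p : κ → n := (Set.range e').piecewise f g
  have hp {j : κ} (hj : j ∈ Set.range e') : p j = f j := Set.piecewise_eq_of_mem _ _ _ hj
  have hp' {j : κ} (hj : j ∉ Set.range e') : p j = g j := Set.piecewise_eq_of_notMem _ _ _ hj
  have hpe : p ∘ e = g ∘ e := funext fun i => hp' (h.notMem_of_mem_left ⟨i, rfl⟩)
  have hpe' : p ∘ e' = f ∘ e' := funext fun i => hp ⟨i, rfl⟩
  have agree (s : κ → n) :
      (∀ j, j ∉ Set.range e → f j = s j) ∧ (∀ j, j ∉ Set.range e' → s j = g j) ↔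
        s = p ∧ ∀ j, j ∉ Set.range e → j ∉ Set.range e' → f j = g j := by
    refine ⟨fun ⟨hf, hg⟩ => ⟨funext fun j => ?_, fun j hj hj' => (hf j hj).trans (hg j hj')⟩, ?_⟩
    · by_cases hj : j ∈ Set.range e'
      · rw [hp hj, hf j (h.notMem_of_mem_right hj)]
      · rw [hp' hj, hg j hj]
    · rintro ⟨rfl, hfg⟩
      refine ⟨fun j hj => ?_, fun j => hp'⟩
      by_cases hj' : j ∈ Set.range e'
      · exact (hp hj').symm
      · exact (hfg j hj hj').trans (hp' hj').symm
  simp only [mul_apply, localOp_apply, ite_zero_mul_ite_zero, agree, ite_and,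
    Finset.sum_ite_eq', Finset.mem_univ, if_true, hpe, hpe']

theorem commute_localOp_localOp {e : ι ↪ κ} {e' : ι' ↪ κ}
    (h : Disjoint (Set.range e) (Set.range e')) {X : Matrix (ι → n) (ι → n) A}
    {Y : Matrix (ι' → n) (ι' → n) A} (hXY : ∀ f g f' g', Commute (X f g) (Y f' g')) :
    Commute (localOp e X) (localOp e' Y) := by
  classical
  ext f g
  rw [localOp_mul_localOp_apply h, localOp_mul_localOp_apply h.symm]
  exact if_congr (forall_congr' fun _ => imp.swap) (hXY _ _ _ _).eq rfl

end Semiring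

section TensorPower

variable [Fintype ι] [Fintype κ] [CommSemiring A]

/-- The tensor power `C^{⊗ι}`. -/
def tensorPower (ι : Type*) [Fintype ι] (C : Matrix n n A) : Matrix (ι → n) (ι → n) A :=
  of fun f g => ∏ j, C (f j) (g j)

open scoped Classical in
theorem tensorPower_eq_kronecker (C : Matrix n n A) (e : ι ↪ κ) :
    tensorPower κ C = (tensorPower ι C ⊗ₖ tensorPower {j // j ∉ Set.range e} C).submatrix
      (splitRangeEquiv e n) (splitRangeEquiv e n) := by
  ext f g
  simp only [tensorPower, of_apply, submatrix_apply, splitRangeEquiv_apply, kroneckerMap_apply]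
  rw [← Fintype.prod_subtype_mul_prod_subtype (· ∈ Set.range e)]
  congr 1
  convert ((Equiv.ofInjective e e.injective).prod_comp fun j => C (f j) (g j)).symm <;> rfl

theorem commute_tensorPower_localOp [DecidableEq ι] [DecidableEq κ] [Fintype n] {C : Matrix n n A}
    (e : ι ↪ κ) {X : Matrix (ι → n) (ι → n) A} (h : Commute (tensorPower ι C) X) :
    Commute (tensorPower κ C) (localOp e X) := by
  classical
  rw [localOp_eq_submatrix, ← kronecker_one, tensorPower_eq_kronecker C e]
  simp only [Commute, SemiconjBy, submatrix_mul_equiv, ← mul_kronecker_mul, h.eq,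
    Matrix.mul_one, Matrix.one_mul]

end TensorPower

end LocalOperators

section TensorFactors

open scoped Kronecker

variable {N k : ℕ}

theorem forall_imp_iff_forall_notMem_range_and {ι κ : Type*} (e : ι → κ) {P Q : κ → Prop}
    (hP : ∀ j ∉ Set.range e, P j) :
    (∀ j, P j → Q j) ↔ (∀ j, j ∉ Set.range e → Q j) ∧ ∀ i, P (e i) → Q (e i) := by
  refine ⟨fun h => ⟨fun j hj => h j (hP j hj), fun i => h (e i)⟩, fun ⟨h, h'⟩ j hj => ?_⟩
  by_cases hr : j ∈ Set.range e
  · obtain ⟨i, rfl⟩ := hr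
    exact h' i hj
  · exact h j hr

/-- The inclusion of `p` consecutive factors, starting with the factor `i`, into `k` factors. -/
def shiftEmb {i p : ℕ} (h : i + p ≤ k) : Fin p ↪ Fin k :=
  (Fin.natAddEmb i).trans (Fin.castLEEmb h)

theorem val_shiftEmb {i p : ℕ} (h : i + p ≤ k) (j : Fin p) : (shiftEmb h j : ℕ) = i + j := rfl

theorem mem_range_shiftEmb {i p : ℕ} {h : i + p ≤ k} {j : Fin k} :
    j ∈ Set.range (shiftEmb h) ↔ i ≤ (j : ℕ) ∧ (j : ℕ) < i + p := by
  constructor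
  · rintro ⟨j, rfl⟩
    rw [val_shiftEmb]
    omega
  · rintro ⟨hi, hp⟩
    exact ⟨⟨j - i, by omega⟩, Fin.ext (Nat.add_sub_of_le hi)⟩

theorem disjoint_range_shiftEmb {i j p s : ℕ} (hi : i + p ≤ k) (hj : j + s ≤ k) (h : i + p ≤ j) :
    Disjoint (Set.range (shiftEmb hi)) (Set.range (shiftEmb hj)) := by
  rw [Set.disjoint_left]
  intro l
  simp only [mem_range_shiftEmb]
  omega

theorem embR_of_le (R : RMat N) {i : ℕ} (hi : k ≤ i + 1) : embR k R i = 1 := by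
  ext f g
  rw [embR, dif_neg hi.not_gt]

theorem embR_add_eq_localOp (R : RMat N) {i p a : ℕ} (h : i + p ≤ k) (ha : a + 1 < p) :
    embR k R (i + a) = localOp (shiftEmb h) (embR p R a) := by
  ext f g
  simp only [embR, localOp_apply, dif_pos ha, dif_pos (show i + a + 1 < k by omega)]
  rw [← ite_and]
  refine if_congr ?_ rfl rfl
  simp only [← and_imp, Function.comp_apply]
  rw [forall_imp_iff_forall_notMem_range_and (shiftEmb h) fun j hj => ?_]
  · simp only [val_shiftEmb, add_assoc, add_right_inj, ne_eq]
  · rw [mem_range_shiftEmb] at hj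
    omega

theorem emb1_eq_localOp {A : Type*} [Ring A] (X : Matrix (Fin N) (Fin N) A) {p : ℕ}
    (h : 0 + p ≤ k) (hp : 0 < p) : emb1 k X = localOp (shiftEmb h) (emb1 p X) := by
  ext f g
  simp only [emb1, localOp_apply, dif_pos hp, dif_pos (show 0 < k by omega)]
  rw [← ite_and]
  refine if_congr ?_ rfl rfl
  rw [forall_imp_iff_forall_notMem_range_and (shiftEmb h) fun j hj => ?_]
  · simp only [val_shiftEmb, zero_add, ne_eq, Function.comp_apply]
  · rw [mem_range_shiftEmb] at hj
    omega

theorem emb1_mul {A : Type*} [Ring A] (k : ℕ) (X Y : Matrix (Fin N) (Fin N) A) :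
    emb1 k (X * Y) = emb1 k X * emb1 k Y := by
  have emb1_one (Z : Matrix (Fin N) (Fin N) A) :
      emb1 1 Z = Z.submatrix (Equiv.funUnique (Fin 1) _) (Equiv.funUnique (Fin 1) _) := by
    ext f g
    simp [emb1]
  rcases k.eq_zero_or_pos with rfl | hk
  · have emb1_zero (Z : Matrix (Fin N) (Fin N) A) : emb1 0 Z = 1 := rfl
    simp only [emb1_zero, Matrix.mul_one]
  · simp only [emb1_eq_localOp (p := 1) _ (by omega : 0 + 1 ≤ k) one_pos, ← localOp_mul, emb1_one,
      submatrix_mul_equiv]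

theorem embR_eq_localOp (R : RMat N) {i : ℕ} (hi : i + 2 ≤ k) :
    embR k R i = localOp (shiftEmb hi) (embR 2 R 0) :=
  embR_add_eq_localOp R hi one_lt_two

theorem embR_two_zero (R : RMat N) :
    embR 2 R 0 = R.submatrix (finTwoArrowEquiv _) (finTwoArrowEquiv _) := by
  ext f g
  simp [embR, finTwoArrowEquiv]

theorem embR_eq_localOp_submatrix (R : RMat N) {i : ℕ} (hi : i + 2 ≤ k) :
    embR k R i =
      localOp (shiftEmb hi) (R.submatrix (finTwoArrowEquiv _) (finTwoArrowEquiv _)) := by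
  rw [embR_eq_localOp R hi, embR_two_zero]

theorem embR_one (k i : ℕ) : embR k (1 : RMat N) i = 1 := by
  rcases le_or_gt k (i + 1) with hi | hi
  · exact embR_of_le 1 hi
  · rw [embR_eq_localOp_submatrix 1 hi, submatrix_one_equiv, localOp_one]

theorem embR_mul (k : ℕ) (R R' : RMat N) (i : ℕ) :
    embR k (R * R') i = embR k R i * embR k R' i := by
  rcases le_or_gt k (i + 1) with hi | hi
  · simp only [embR_of_le _ hi, _root_.mul_one]
  · simp only [embR_eq_localOp_submatrix _ hi, ← localOp_mul, submatrix_mul_equiv]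

/-- `embR` in fixed factors, as a monoid homomorphism. -/
def embRHom (N k i : ℕ) : RMat N →* TMat N k ℂ where
  toFun R := embR k R i
  map_one' := embR_one k i
  map_mul' R R' := embR_mul k R R' i

theorem embR_one_add_smul (c : ℂ) (R : RMat N) {i : ℕ} (hi : i + 1 < k) :
    embR k (1 + c • R) i = 1 + c • embR k R i := by
  have hone : ((1 : RMat N).submatrix (finTwoArrowEquiv _) (finTwoArrowEquiv _)) = 1 :=
    submatrix_one_equiv _
  simp only [embR_eq_localOp_submatrix _ hi, submatrix_add, submatrix_smul, localOp_add,
    localOp_smul, Pi.add_apply, Pi.smul_apply, hone, localOp_one]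

theorem commute_embR (R : RMat N) {i j : ℕ} (hij : i + 2 ≤ j) :
    Commute (embR k R i) (embR k R j) := by
  rcases le_or_gt k (j + 1) with hj | hj
  · rw [embR_of_le R hj]
    exact Commute.one_right _
  · rw [embR_eq_localOp R (by omega : i + 2 ≤ k), embR_eq_localOp R hj]
    exact commute_localOp_localOp (disjoint_range_shiftEmb _ _ hij) fun _ _ _ _ => Commute.all _ _

theorem IsBraiding.embR_mul_embR_mul_embR {R : RMat N} (h : IsBraiding R) {i : ℕ} (hi : i + 2 < k) :
    embR k R i * embR k R (i + 1) * embR k R i =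
      embR k R (i + 1) * embR k R i * embR k R (i + 1) := by
  have h0 : embR k R i = localOp (shiftEmb hi) (embR 3 R 0) :=
    embR_add_eq_localOp R hi (a := 0) (by norm_num)
  have h1 : embR k R (i + 1) = localOp (shiftEmb hi) (embR 3 R 1) :=
    embR_add_eq_localOp R hi (by norm_num)
  rw [h0, h1]
  simp only [← localOp_mul]
  exact congrArg _ h

theorem HeckeCond.mul_self {R : RMat N} {q : ℂ} (h : HeckeCond R q) (hq : q ≠ 0) :
    R * R = 1 + (q - q⁻¹) • R := by
  rw [HeckeCond] at h
  simp only [sub_mul, mul_add, smul_mul_assoc, Matrix.mul_smul, Matrix.one_mul, Matrix.mul_one,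
    smul_inv_smul₀ hq] at h
  rw [eq_comm, ← sub_eq_zero, ← h]
  module

theorem isHeckeFamily_embR {R : RMat N} {q : ℂ} (hR : IsBraiding R) (h : HeckeCond R q)
    (hq : q ≠ 0) : IsHeckeFamily k q (embR k R) where
  commute _ _ := commute_embR R
  braid _ := hR.embR_mul_embR_mul_embR
  mul_self i hi := by rw [← embR_mul, h.mul_self hq, embR_one_add_smul _ _ hi]

theorem Ssym_eq_symmetrizer (k : ℕ) (R : RMat N) (q : ℂ) (n : ℕ) :
    Ssym k R q n = symmetrizer (embR k R) q n := by
  induction n using Nat.twoStepInduction with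
  | zero => rfl
  | one => rfl
  | more n _ ih => rw [Ssym, symmetrizer, ih]

theorem commute_tensorPower_embR {R : RMat N} {C : Matrix (Fin N) (Fin N) ℂ}
    (h : Commute R (C ⊗ₖ C)) (i : ℕ) : Commute (tensorPower (Fin k) C) (embR k R i) := by
  rcases le_or_gt k (i + 1) with hi | hi
  · rw [embR_of_le R hi]
    exact Commute.one_right _
  · have hC : tensorPower (Fin 2) C =
        (C ⊗ₖ C).submatrix (finTwoArrowEquiv _) (finTwoArrowEquiv _) := by
      ext f g
      simp [tensorPower, finTwoArrowEquiv]
    rw [embR_eq_localOp_submatrix R hi]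
    refine commute_tensorPower_localOp _ ?_
    rw [hC, Commute, SemiconjBy, submatrix_mul_equiv, submatrix_mul_equiv, h.eq]

end TensorFactors

section Generators

variable {N k : ℕ} {A : Type*} [Ring A] [Algebra ℂ A]

/-- `liftC` as an algebra homomorphism. -/
def liftCHom (N k : ℕ) (A : Type*) [Ring A] [Algebra ℂ A] : TMat N k ℂ →ₐ[ℂ] TMat N k A :=
  (Algebra.ofId ℂ A).mapMatrix

theorem liftCHom_apply (X : TMat N k ℂ) : liftCHom N k A X = liftC A X := rfl

/-- The invertible operators `R_i` on the tensor power, with entries in `A`. -/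
def braidUnit (k : ℕ) (A : Type*) [Ring A] [Algebra ℂ A] (R : (RMat N)ˣ) (i : ℕ) : (TMat N k A)ˣ :=
  Units.map ((liftCHom N k A : TMat N k ℂ →* TMat N k A).comp (embRHom N k i)) R

theorem val_braidUnit (R : (RMat N)ˣ) (i : ℕ) :
    (braidUnit k A R i : TMat N k A) = liftC A (embR k R i) := rfl

theorem val_inv_braidUnit (R : (RMat N)ˣ) (i : ℕ) :
    (↑(braidUnit k A R i)⁻¹ : TMat N k A) = liftC A (embR k ↑R⁻¹ i) := rfl

theorem isBraidFamily_braidUnit {R : (RMat N)ˣ} (hR : IsBraiding (R : RMat N)) :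
    IsBraidFamily k (braidUnit k A R) where
  commute _ _ hij := Commute.units_of_val ((commute_embR (R : RMat N) hij).map (liftCHom N k A))
  braid i hi := Units.ext <| by
    simpa only [Units.val_mul, val_braidUnit, map_mul, liftCHom_apply] using
      congrArg (liftCHom N k A) (hR.embR_mul_embR_mul_embR hi)

theorem liftC_embR_eq_localOp (R : RMat N) {i : ℕ} (hi : i + 2 ≤ k) :
    liftC A (embR k R i) = localOp (shiftEmb hi) (liftC A (embR 2 R 0)) := by
  rw [embR_eq_localOp R hi]
  exact localOp_map _ _ (map_zero _)

theorem commute_liftC_embR_emb1 (R : RMat N) (X : Matrix (Fin N) (Fin N) A) {j : ℕ} (hj : 1 ≤ j) :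
    Commute (liftC A (embR k R j)) (emb1 k X) := by
  rcases le_or_gt k (j + 1) with hk | hk
  · rw [embR_of_le R hk, ← liftCHom_apply, map_one]
    exact Commute.one_left _
  · rw [liftC_embR_eq_localOp R hk, emb1_eq_localOp X (p := 1) (by omega) one_pos]
    exact commute_localOp_localOp (disjoint_range_shiftEmb _ _ hj).symm fun _ _ _ _ =>
      Algebra.commutes _ _

theorem isQuantumWeylPair_emb1 {R : (RMat N)ˣ} {M D : Matrix (Fin N) (Fin N) A}
    (hDD : DDRel (↑R⁻¹ : RMat N) D) (hperm : PermRel (R : RMat N) ↑R⁻¹ M D) :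
    IsQuantumWeylPair k (braidUnit k A R) (emb1 k M) (emb1 k D) where
  commute_left _ hj := commute_liftC_embR_emb1 _ M hj
  commute_right _ hj := commute_liftC_embR_emb1 _ D hj
  perm hk := by
    have h2 : 0 + 2 ≤ k := by omega
    have := congrArg (localOp (shiftEmb h2)) hperm
    simpa only [val_braidUnit, val_inv_braidUnit, localOp_add, localOp_mul, localOp_one,
      ← liftC_embR_eq_localOp, ← emb1_eq_localOp _ h2 two_pos] using this
  rel_right hk := by
    have h2 : 0 + 2 ≤ k := by omega
    have := congrArg (localOp (shiftEmb h2)) hDD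
    simpa only [val_inv_braidUnit, localOp_mul, ← liftC_embR_eq_localOp,
      ← emb1_eq_localOp _ h2 two_pos] using this

theorem copyX_eq_braidCopy (k : ℕ) (R : (RMat N)ˣ) (X : Matrix (Fin N) (Fin N) A) (n : ℕ) :
    copyX k R ↑R⁻¹ X n = braidCopy (braidUnit k A R) (emb1 k X) n := by
  induction n with
  | zero => rfl
  | succ n ih => rw [copyX, braidCopy, ih, val_braidUnit, val_inv_braidUnit]

theorem upChain_eq_upProd (k : ℕ) (R : (RMat N)ˣ) (X : Matrix (Fin N) (Fin N) A) (n : ℕ) :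
    upChain k R ↑R⁻¹ X n = upProd (braidUnit k A R) (emb1 k X) n := by
  induction n with
  | zero => rfl
  | succ n ih => rw [upChain, List.prod_range_succ, ← upChain, ih, copyX_eq_braidCopy, upProd]

theorem downChain_eq_downProd (k : ℕ) (R : (RMat N)ˣ) (X : Matrix (Fin N) (Fin N) A) (n : ℕ) :
    downChain k R ↑R⁻¹ X n = downProd (braidUnit k A R) (emb1 k X) n := by
  induction n with
  | zero => rfl
  | succ n ih =>
    rw [downChain, List.range_succ, List.reverse_append, List.reverse_singleton,
      List.singleton_append, List.map_cons, List.prod_cons, ← downChain, ih, copyX_eq_braidCopy,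
      downProd]

theorem capChainS_eq_capelliProd (k : ℕ) (R : (RMat N)ˣ) (q : ℂ) (L : Matrix (Fin N) (Fin N) A)
    (n : ℕ) : capChainS k R ↑R⁻¹ q L n = capelliProd (braidUnit k A R) q (emb1 k L) n := by
  induction n with
  | zero => rfl
  | succ n ih =>
    rw [capChainS, List.prod_range_succ, ← capChainS, ih, copyX_eq_braidCopy, capelliProd]

theorem capChainS_mul_liftC_Ssym {R : (RMat N)ˣ} {q : ℂ} (hR : IsBraiding (R : RMat N))
    (hH : HeckeCond (R : RMat N) q) (hq : q - q⁻¹ ≠ 0) {M D : Matrix (Fin N) (Fin N) A}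
    (hDD : DDRel (↑R⁻¹ : RMat N) D) (hperm : PermRel (R : RMat N) ↑R⁻¹ M D)
    (hnum : ∀ j, 2 ≤ j → j ≤ k → qNum q j ≠ 0) :
    capChainS k R ↑R⁻¹ q (M * D) k * liftC A (Ssym k R q k) = q⁻¹ ^ (k * (k - 1)) •
      (upChain k R ↑R⁻¹ M k * downChain k R ↑R⁻¹ D k * liftC A (Ssym k R q k)) := by
  have eig (i : ℕ) (hi : i + 1 < k) :
      (braidUnit k A R i : TMat N k A) * liftC A (Ssym k (R : RMat N) q k) =
        q • liftC A (Ssym k (R : RMat N) q k) := by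
    have h := (isHeckeFamily_embR hR hH (ne_zero_of_sub_inv_ne_zero hq)).mul_symmetrizer hq le_rfl
      hnum hi
    rw [← Ssym_eq_symmetrizer] at h
    simpa only [val_braidUnit, map_mul, map_smul, liftCHom_apply] using congrArg (liftCHom N k A) h
  rw [capChainS_eq_capelliProd, upChain_eq_upProd, downChain_eq_downProd, emb1_mul]
  exact (isQuantumWeylPair_emb1 hDD hperm).capelliProd_mul (isBraidFamily_braidUnit hR) hq le_rfl
    eig

end Generators

section PartialTrace

open scoped Kronecker

variable {α β γ S : Type*}

/-- The block at `(p, p')` of an operator on a tensor product: an operator on the first factor. -/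
def block (Y : Matrix (α × β) (α × β) S) (p p' : β) : Matrix α α S :=
  Y.submatrix (·, p) (·, p')

variable [CommSemiring S]

/-- The partial trace over the first tensor factor, weighted by `C`. -/
def partialTrace [Fintype α] (C : Matrix α α S) (Y : Matrix (α × β) (α × β) S) : Matrix β β S :=
  of fun p p' => (C * block Y p p').trace

/-- The operator `Z` acting in the first two of three tensor factors. -/
def firstTwo [DecidableEq γ] (Z : Matrix (α × β) (α × β) S) : Matrix (α × β × γ) (α × β × γ) S :=
  (Z ⊗ₖ (1 : Matrix γ γ S)).submatrix (Equiv.prodAssoc α β γ).symm (Equiv.prodAssoc α β γ).symm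

theorem block_kronecker (X : Matrix α α S) (Y : Matrix β β S) (p p' : β) :
    block (X ⊗ₖ Y) p p' = Y p p' • X := by
  ext a a'
  exact mul_comm _ _

theorem block_firstTwo [DecidableEq γ] (Z : Matrix (α × β) (α × β) S) (x x' : β) (y y' : γ) :
    block (firstTwo Z) (x, y) (x', y') = (1 : Matrix γ γ S) y y' • block Z x x' := by
  ext a a'
  exact mul_comm _ _

variable [Fintype α]

theorem block_mul [Fintype β] (Y Z : Matrix (α × β) (α × β) S) (p r : β) :
    block (Y * Z) p r = ∑ s, block Y p s * block Z s r := by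
  ext a a'
  simp only [block, submatrix_apply, mul_apply, Matrix.sum_apply, Fintype.sum_prod_type_right]

theorem partialTrace_one_kronecker_mul [DecidableEq α] [Fintype β] (C : Matrix α α S)
    (Z : Matrix β β S) (Y : Matrix (α × β) (α × β) S) :
    partialTrace C ((1 ⊗ₖ Z) * Y) = Z * partialTrace C Y := by
  ext p p'
  simp [partialTrace, block_mul, block_kronecker, mul_apply, Matrix.mul_sum, trace_sum]

theorem partialTrace_mul_one_kronecker [DecidableEq α] [Fintype β] (C : Matrix α α S)
    (Z : Matrix β β S) (Y : Matrix (α × β) (α × β) S) :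
    partialTrace C (Y * (1 ⊗ₖ Z)) = partialTrace C Y * Z := by
  ext p p'
  simp [partialTrace, block_mul, block_kronecker, mul_apply, Matrix.mul_sum, trace_sum,
    mul_comm]

theorem partialTrace_firstTwo [DecidableEq γ] (C : Matrix α α S) (Z : Matrix (α × β) (α × β) S) :
    partialTrace C (firstTwo Z) = partialTrace C Z ⊗ₖ (1 : Matrix γ γ S) := by
  ext ⟨x, y⟩ ⟨x', y'⟩
  simp [partialTrace, block_firstTwo, mul_comm]

theorem partialTrace_firstTwo_mul_mul_firstTwo_apply [DecidableEq α] [Fintype β] [Fintype γ]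
    [DecidableEq γ] (C : Matrix α α S) (X Z : Matrix (α × β) (α × β) S)
    (Y : Matrix (β × γ) (β × γ) S) (x x' : β) (y y' : γ) :
    partialTrace C (firstTwo X * (1 ⊗ₖ Y) * firstTwo Z) (x, y) (x', y') =
      ∑ f, ∑ g, (C * (block X x f * block Z g x')).trace * Y (f, y) (g, y') := by
  refine Eq.trans ?_ Finset.sum_comm
  simp [partialTrace, block_mul, block_kronecker, block_firstTwo, Fintype.sum_prod_type,
    Matrix.mul_sum, Matrix.sum_mul, trace_sum, one_apply, mul_comm (Y _ _), apply_ite trace]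

end PartialTrace

section SkewInverse

open scoped Kronecker

variable {N : ℕ}

section

variable {R Ψ : RMat N}

/-- The matrix with rows and columns regrouped so that `SkewInv` becomes matrix inversion. -/
def reshuffle (R : RMat N) : RMat N :=
  of fun p p' => R (p.1, p'.2) (p.2, p'.1)

theorem skewInv_iff_reshuffle_mul_reshuffle :
    SkewInv R Ψ ↔ reshuffle R * reshuffle Ψ = 1 := by
  simp only [SkewInv, ← ext_iff, Prod.forall, mul_apply, Fintype.sum_prod_type_right, reshuffle,
    of_apply, one_apply, Prod.mk.injEq]
  exact ⟨fun h i a d c => (h i a c d).trans (by simp only [eq_comm (a := c)]),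
    fun h i a c d => (h i a d c).trans (by simp only [eq_comm (a := c)])⟩

namespace SkewInv

theorem symm (h : SkewInv R Ψ) : SkewInv Ψ R := by
  rw [skewInv_iff_reshuffle_mul_reshuffle] at h ⊢
  exact mul_eq_one_comm.mp h

theorem eq_sum_of_sum_eq (h : SkewInv R Ψ) {F G : Fin N → Fin N → ℂ}
    (hFG : ∀ y y', ∑ f, ∑ g, F f g * R (f, y) (g, y') = G y y') (f g : Fin N) :
    F f g = ∑ y, ∑ y', G y y' * Ψ (y', g) (y, f) := by
  have hvec : (fun p : Fin N × Fin N => F p.1 p.2) ᵥ* reshuffle R = fun p => G p.2 p.1 := by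
    ext ⟨y', y⟩
    simpa only [vecMul, dotProduct, reshuffle, of_apply, Fintype.sum_prod_type] using hFG y y'
  have := congrArg (· ᵥ* reshuffle Ψ) hvec
  simp only [vecMul_vecMul, skewInv_iff_reshuffle_mul_reshuffle.mp h, vecMul_one] at this
  simpa only [vecMul, dotProduct, reshuffle, of_apply, Fintype.sum_prod_type_right] using
    congrFun this (f, g)

theorem partialTrace_Cmat (h : SkewInv R Ψ) : partialTrace (Cmat Ψ) R = 1 := by
  ext x x'
  have key (i : Fin N) : ∑ a, ∑ b, Ψ (i, a) (i, b) * R (b, x) (a, x') =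
      if i = x' ∧ x = i then 1 else 0 := h.symm i i x x'
  calc partialTrace (Cmat Ψ) R x x'
      = ∑ a, ∑ b, ∑ i, Ψ (i, a) (i, b) * R (b, x) (a, x') := by
        simp only [partialTrace, trace, diag_apply, of_apply, mul_apply, Cmat, block,
          submatrix_apply, Finset.sum_mul]
    _ = ∑ i, ∑ a, ∑ b, Ψ (i, a) (i, b) * R (b, x) (a, x') := by
        exact (Finset.sum_congr rfl fun _ _ => Finset.sum_comm).trans Finset.sum_comm
    _ = (1 : Matrix (Fin N) (Fin N) ℂ) x x' := by
        simp [key, ite_and, one_apply, eq_comm]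

end SkewInv

end

theorem conj_eq_of_braid {G : Type*} [Group G] {a b : G} (h : a * b * a = b * a * b) :
    a⁻¹ * b * a = b * a * b⁻¹ := by
  rw [eq_mul_inv_iff_mul_eq, mul_assoc, mul_assoc, inv_mul_eq_iff_eq_mul, ← mul_assoc, ← mul_assoc,
    h]

/-- Triples of indices as functions on three points. -/
def finThreeArrowEquiv (n : Type*) : (Fin 3 → n) ≃ n × n × n where
  toFun f := (f 0, f 1, f 2)
  invFun p := ![p.1, p.2.1, p.2.2]
  left_inv f := by ext i; fin_cases i <;> rfl
  right_inv _ := rfl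

theorem finThreeArrowEquiv_apply {n : Type*} (f : Fin 3 → n) :
    finThreeArrowEquiv n f = (f 0, f 1, f 2) := rfl

theorem embR_three_zero (R : RMat N) :
    embR 3 R 0 = (firstTwo R).submatrix (finThreeArrowEquiv _) (finThreeArrowEquiv _) := by
  ext f g
  simp [embR, firstTwo, Fin.forall_fin_succ, finThreeArrowEquiv_apply, one_apply]

theorem embR_three_one (R : RMat N) :
    embR 3 R 1 = (1 ⊗ₖ R).submatrix (finThreeArrowEquiv _) (finThreeArrowEquiv _) := by
  ext f g
  simp [embR, Fin.forall_fin_succ, finThreeArrowEquiv_apply, one_apply]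

variable {R : (RMat N)ˣ} {Ψ : RMat N}

theorem IsBraiding.firstTwo_inv_mul_mul_firstTwo (hR : IsBraiding (R : RMat N)) :
    firstTwo (↑R⁻¹ : RMat N) * (1 ⊗ₖ (R : RMat N)) * firstTwo (R : RMat N) =
      (1 ⊗ₖ (R : RMat N)) * firstTwo (R : RMat N) * (1 ⊗ₖ (↑R⁻¹ : RMat N)) := by
  have hbraid : Units.map (embRHom N 3 0) R * Units.map (embRHom N 3 1) R *
      Units.map (embRHom N 3 0) R = Units.map (embRHom N 3 1) R * Units.map (embRHom N 3 0) R *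
      Units.map (embRHom N 3 1) R := Units.ext hR
  have hconj : embR 3 (↑R⁻¹ : RMat N) 0 * embR 3 (R : RMat N) 1 * embR 3 (R : RMat N) 0 =
      embR 3 (R : RMat N) 1 * embR 3 (R : RMat N) 0 * embR 3 (↑R⁻¹ : RMat N) 1 :=
    congrArg Units.val (conj_eq_of_braid hbraid)
  simp only [embR_three_zero, embR_three_one, submatrix_mul_equiv] at hconj
  exact (reindex (finThreeArrowEquiv _).symm (finThreeArrowEquiv _).symm).injective hconj

theorem IsBraiding.firstTwo_mul_mul_firstTwo_inv (hR : IsBraiding (R : RMat N)) :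
    firstTwo (R : RMat N) * (1 ⊗ₖ (R : RMat N)) * firstTwo (↑R⁻¹ : RMat N) =
      (1 ⊗ₖ (↑R⁻¹ : RMat N)) * firstTwo (R : RMat N) * (1 ⊗ₖ (R : RMat N)) := by
  have hbraid : Units.map (embRHom N 3 1) R * Units.map (embRHom N 3 0) R *
      Units.map (embRHom N 3 1) R = Units.map (embRHom N 3 0) R * Units.map (embRHom N 3 1) R *
      Units.map (embRHom N 3 0) R := Units.ext (Eq.symm hR)
  have hconj : embR 3 (↑R⁻¹ : RMat N) 1 * embR 3 (R : RMat N) 0 * embR 3 (R : RMat N) 1 =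
      embR 3 (R : RMat N) 0 * embR 3 (R : RMat N) 1 * embR 3 (↑R⁻¹ : RMat N) 0 :=
    congrArg Units.val (conj_eq_of_braid hbraid)
  simp only [embR_three_zero, embR_three_one, submatrix_mul_equiv] at hconj
  exact (reindex (finThreeArrowEquiv _).symm (finThreeArrowEquiv _).symm).injective hconj.symm

theorem SkewInv.trace_Cmat_mul_block_mul_block (h : SkewInv (R : RMat N) Ψ) {X Z U V : RMat N}
    (hXZ : firstTwo X * (1 ⊗ₖ (R : RMat N)) * firstTwo Z =
      (1 ⊗ₖ U) * firstTwo (R : RMat N) * (1 ⊗ₖ V))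
    (hUV : U * V = 1) (x x' f g : Fin N) :
    (Cmat Ψ * (block X x f * block Z g x')).trace = if x = x' then Cmat Ψ g f else 0 := by
  have hptr : partialTrace (Cmat Ψ) (firstTwo X * (1 ⊗ₖ (R : RMat N)) * firstTwo Z) = 1 := by
    rw [hXZ, partialTrace_mul_one_kronecker, partialTrace_one_kronecker_mul,
      partialTrace_firstTwo, h.partialTrace_Cmat, one_kronecker_one, Matrix.mul_one, hUV]
  have hsum (y y' : Fin N) :
      ∑ f, ∑ g, (Cmat Ψ * (block X x f * block Z g x')).trace * (R : RMat N) (f, y) (g, y') =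
        if (x, y) = (x', y') then 1 else 0 := by
    rw [← partialTrace_firstTwo_mul_mul_firstTwo_apply, hptr, one_apply]
  rw [h.eq_sum_of_sum_eq hsum f g]
  simp [ite_and, Cmat]

theorem Cmat_mul_block_inv_apply (hR : IsBraiding (R : RMat N)) (h : SkewInv (R : RMat N) Ψ)
    (x z u v : Fin N) :
    (Cmat Ψ * block (↑R⁻¹ : RMat N) x z) u v = ∑ c, Cmat Ψ c z * Ψ (x, u) (c, v) := by
  have hsum (y y' : Fin N) :
      ∑ v, ∑ u, (Cmat Ψ * block (↑R⁻¹ : RMat N) x z) u v * (R : RMat N) (v, y) (u, y') =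
        if x = y' then Cmat Ψ y z else 0 := by
    rw [← h.trace_Cmat_mul_block_mul_block (IsBraiding.firstTwo_inv_mul_mul_firstTwo hR) R.mul_inv,
      ← Matrix.mul_assoc, trace, Finset.sum_comm]
    rfl
  simpa using h.eq_sum_of_sum_eq hsum v u

theorem block_inv_mul_Cmat_apply (hR : IsBraiding (R : RMat N)) (h : SkewInv (R : RMat N) Ψ)
    (c x u v : Fin N) :
    (block (↑R⁻¹ : RMat N) c x * Cmat Ψ) u v = ∑ z, Cmat Ψ c z * Ψ (z, u) (x, v) := by
  have hsum (y y' : Fin N) :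
      ∑ v, ∑ u, (block (↑R⁻¹ : RMat N) c x * Cmat Ψ) u v * (R : RMat N) (v, y) (u, y') =
        if y = x then Cmat Ψ c y' else 0 := by
    rw [← h.trace_Cmat_mul_block_mul_block (IsBraiding.firstTwo_mul_mul_firstTwo_inv hR) R.inv_mul,
      ← Matrix.mul_assoc, trace_mul_cycle, trace, Finset.sum_comm]
    rfl
  simpa using h.eq_sum_of_sum_eq hsum v u

theorem commute_kronecker_Cmat (hR : IsBraiding (R : RMat N)) (h : SkewInv (R : RMat N) Ψ) :
    Commute (R : RMat N) (Cmat Ψ ⊗ₖ Cmat Ψ) := by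
  suffices Commute (↑R⁻¹ : RMat N) (Cmat Ψ ⊗ₖ Cmat Ψ) from Commute.units_inv_left_iff.mp this
  have hblock (c w : Fin N) : block ((↑R⁻¹ : RMat N) * Cmat Ψ ⊗ₖ Cmat Ψ) c w =
      block (Cmat Ψ ⊗ₖ Cmat Ψ * (↑R⁻¹ : RMat N)) c w := by
    ext u v
    simp only [block_mul, block_kronecker, Matrix.mul_smul, Matrix.smul_mul, Matrix.sum_apply,
      Matrix.smul_apply, smul_eq_mul, Cmat_mul_block_inv_apply hR h, block_inv_mul_Cmat_apply hR h,
      Finset.mul_sum]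
    rw [Finset.sum_comm]
    exact Finset.sum_congr rfl fun _ _ => Finset.sum_congr rfl fun _ _ => mul_left_comm _ _ _
  ext ⟨u, c⟩ ⟨v, w⟩
  exact congrFun₂ (hblock c w) u v

end SkewInverse

section Trace

open scoped Kronecker

variable {N k : ℕ} {A : Type*} [Ring A] [Algebra ℂ A]

theorem rTr_eq_trace (C : Matrix (Fin N) (Fin N) ℂ) (X : TMat N k A) :
    rTr C X = (liftC A (tensorPower (Fin k) C) * X).trace := by
  simp only [rTr, trace, diag_apply, mul_apply, liftC, map_apply, tensorPower, of_apply,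
    Algebra.smul_def]

theorem rTr_smul (C : Matrix (Fin N) (Fin N) ℂ) (c : ℂ) (X : TMat N k A) :
    rTr C (c • X) = c • rTr C X := by
  rw [rTr_eq_trace, rTr_eq_trace, Matrix.mul_smul, trace_smul]

theorem trace_liftC_mul_comm (S : TMat N k ℂ) (X : TMat N k A) :
    (liftC A S * X).trace = (X * liftC A S).trace := by
  simp only [trace, diag_apply, mul_apply, liftC, map_apply, Algebra.commutes]
  exact Finset.sum_comm

theorem rTr_liftC_mul_comm {C : Matrix (Fin N) (Fin N) ℂ} {S : TMat N k ℂ}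
    (hS : Commute (tensorPower (Fin k) C) S) (X : TMat N k A) :
    rTr C (liftC A S * X) = rTr C (X * liftC A S) := by
  have hlift : Commute (liftC A (tensorPower (Fin k) C)) (liftC A S) := hS.map (liftCHom N k A)
  rw [rTr_eq_trace, rTr_eq_trace, ← Matrix.mul_assoc, hlift.eq, Matrix.mul_assoc,
    trace_liftC_mul_comm, Matrix.mul_assoc]

theorem commute_tensorPower_Ssym {R : RMat N} {C : Matrix (Fin N) (Fin N) ℂ}
    (h : Commute R (C ⊗ₖ C)) (q : ℂ) (n : ℕ) :
    Commute (tensorPower (Fin k) C) (Ssym k R q n) := by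
  rw [Ssym_eq_symmetrizer]
  exact commute_symmetrizer q fun i _ => commute_tensorPower_embR h i

theorem statement5_general {R : (RMat N)ˣ} {q : ℂ} (hq : q - q⁻¹ ≠ 0)
    (hR : IsBraiding (R : RMat N)) (hH : HeckeCond (R : RMat N) q)
    {C : Matrix (Fin N) (Fin N) ℂ} (hC : Commute (R : RMat N) (C ⊗ₖ C))
    {M D : Matrix (Fin N) (Fin N) A} (hDD : DDRel (↑R⁻¹ : RMat N) D)
    (hperm : PermRel (R : RMat N) (↑R⁻¹ : RMat N) M D)
    (hnum : ∀ j, 2 ≤ j → j ≤ k → qNum q j ≠ 0) :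
    rTr C (liftC A (Ssym k R q k) * capChainS k R ↑R⁻¹ q (M * D) k) =
      q⁻¹ ^ (k * (k - 1)) •
        rTr C (liftC A (Ssym k R q k) * upChain k R ↑R⁻¹ M k * downChain k R ↑R⁻¹ D k) := by
  have hS : Commute (tensorPower (Fin k) C) (Ssym k R q k) := commute_tensorPower_Ssym hC q k
  rw [rTr_liftC_mul_comm hS, capChainS_mul_liftC_Ssym hR hH hq hDD hperm hnum, rTr_smul,
    ← rTr_liftC_mul_comm hS, ← Matrix.mul_assoc]

end Trace

/-- generalized quantum Capelli identity, symmetric form: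
`⟨S^(k) L_{1̄}(L_{2̄}−q⁻¹I)⋯(L_{k̄}−q^{−(k−1)}(k−1)_q I)⟩_{1…k}
  = q^{−k(k−1)} ⟨S^(k) M_{1̄}⋯M_{k̄} D_{k̄}⋯D_{1̄}⟩_{1…k}`, with `L = MD`. -/
theorem statement5 {N : ℕ} (R Rinv Ψ : RMat N) (q : ℂ)
    (hq0 : q ≠ 0) (hq1 : q ≠ 1) (hqm1 : q ≠ -1)
    (hinv : R * Rinv = 1) (hinv' : Rinv * R = 1)
    (hbr : IsBraiding R) (hH : HeckeCond R q) (hΨ : SkewInv R Ψ)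
    {A : Type _} [Ring A] [Algebra ℂ A]
    (M D : Matrix (Fin N) (Fin N) A)
    (hRE : RERel R M) (hDD : DDRel Rinv D) (hperm : PermRel R Rinv M D) :
    ∀ k : ℕ, 1 ≤ k → (∀ j : ℕ, 2 ≤ j → j ≤ k → qNum q j ≠ 0) →
      rTr (Cmat Ψ) (liftC A (Ssym k R q k) * capChainS k R Rinv q (M * D) k)
        = (q⁻¹ ^ (k * (k - 1))) •
            rTr (Cmat Ψ)
              (liftC A (Ssym k R q k) * upChain k R Rinv M k * downChain k R Rinv D k) := by
  intro k _ hnum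
  have hsub : q - q⁻¹ ≠ 0 := by
    rw [sub_ne_zero, Ne, self_eq_inv₀]
    tauto
  exact statement5_general (R := ⟨R, Rinv, hinv, hinv'⟩) hsub hbr hH
    (commute_kronecker_Cmat (R := ⟨R, Rinv, hinv, hinv'⟩) hbr hΨ) hDD hperm hnum
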